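/- Let N be an even positive integer and p an integer with 2 ≤ p ≤ N/2; assume u^p[2n]² + v^p[2n]² > 0 for every n. With φ_{[1],λ}^p = C(ψ_{[1],λ}^p), every x ∈ Π[N] admits the tight-frame expansion x[k] = (1/2)·Σ_{λ=0}^{1} Σ_{l=0}^{N/2−1} ( ⟨x, ψ_{[1],λ}^p[·−2l]⟩·ψ_{[1],λ}^p[k−2l] + ⟨x, φ_{[1],λ}^p[·−2l]⟩·φ_{[1],λ}^p[k−2l] ) for every k; i.e., the union of the shifted wavelet packets and the shifted complementary wavelet packets forms a tight frame of Π[N] with frame bound 2. -/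

import Mathlib

open MeasureTheory

namespace WP

/-- The root of unity ω = e^{2πi/N}. -/
noncomputable def ww (N : ℕ) : ℂ := Complex.exp (2 * Real.pi * Complex.I / N)

/-- DFT of a signal `x ∈ Π[N]`: x̂[n] = Σ_{k=0}^{N−1} ω^{−kn} x[k]. -/
noncomputable def dft (N : ℕ) (x : ℤ → ℂ) (n : ℤ) : ℂ :=
  ∑ k ∈ Finset.range N, ww N ^ (-((k : ℤ) * n)) * x k

/-- Inner product on `Π[N]`. -/
noncomputable def inner1 (N : ℕ) (x y : ℤ → ℂ) : ℂ :=
  ∑ k ∈ Finset.range N, x k * (starRingEnd ℂ) (y k)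

/-- The discrete periodic Hilbert transform, defined via the DFT:
    Ĥ(x)[n] = −i·x̂[n] for 0<n<N/2, i·x̂[n] for N/2<n<N, 0 at n=0 and n=N/2. -/
noncomputable def hilbertT (N : ℕ) (x : ℤ → ℂ) (k : ℤ) : ℂ :=
  (N : ℂ)⁻¹ * ∑ n ∈ Finset.range N,
    (if 0 < n ∧ n < N / 2 then -Complex.I else if N / 2 < n ∧ n < N then Complex.I else 0) *
      dft N x n * ww N ^ ((k * (n : ℤ)))

/-- The complementary-WP operator `C`, defined via the DFT:
    Ĉ(x)[n] = −i·x̂[n] for 0<n<N/2, i·x̂[n] for N/2<n<N, x̂[0] at 0, x̂[N/2] at N/2. -/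
noncomputable def cwpT (N : ℕ) (x : ℤ → ℂ) (k : ℤ) : ℂ :=
  (N : ℂ)⁻¹ * ∑ n ∈ Finset.range N,
    (if n = 0 ∨ n = N / 2 then 1 else if n < N / 2 then -Complex.I else Complex.I) *
      dft N x n * ww N ^ ((k * (n : ℤ)))

/-- The order-p B-spline b^p(t). -/
noncomputable def bspline (p : ℕ) (t : ℝ) : ℝ :=
  (1 / (Nat.factorial (p - 1) : ℝ)) *
    ∑ k ∈ Finset.range (p + 1),
      (-1 : ℝ) ^ k * (p.choose k : ℝ) * max (t + (p : ℝ) / 2 - (k : ℝ)) 0 ^ (p - 1)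

/-- u^p[n] = Σ_{k=−N/2}^{N/2−1} ω^{−kn} b^p(k). -/
noncomputable def uSeq (N p : ℕ) (n : ℤ) : ℂ :=
  ∑ k ∈ Finset.range N,
    ww N ^ (-(((k : ℤ) - (N : ℤ) / 2) * n)) * (bspline p ((k : ℝ) - (N : ℝ) / 2) : ℂ)

/-- v^p[n] = e^{−πin/N} Σ_{k=−N/2}^{N/2−1} ω^{−kn} b^p(k+1/2). -/
noncomputable def vSeq (N p : ℕ) (n : ℤ) : ℂ :=
  Complex.exp (-Real.pi * Complex.I * n / N) *
    ∑ k ∈ Finset.range N,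
      ww N ^ (-(((k : ℤ) - (N : ℤ) / 2) * n)) *
        (bspline p ((k : ℝ) - (N : ℝ) / 2 + 1 / 2) : ℂ)

/-- The span-two discrete-time B-spline b_{[1]}^p ∈ Π[N]:
    the N-periodic signal with b_{[1]}^p[k] = b^p(k/2)/2 for −N/2 ≤ k ≤ N/2−1. -/
noncomputable def bs1 (N p : ℕ) (k : ℤ) : ℂ :=
  ((bspline p ((((k + (N : ℤ) / 2) % (N : ℤ) - (N : ℤ) / 2 : ℤ) : ℝ) / 2) : ℝ) : ℂ) / 2

/-- Its DFT b̂_{[1]}^p[n] = Σ_{k=−N/2}^{N/2−1} ω^{−kn} b_{[1]}^p[k]. -/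
noncomputable def bhat1 (N p : ℕ) (n : ℤ) : ℂ :=
  ∑ k ∈ Finset.range N,
    ww N ^ (-(((k : ℤ) - (N : ℤ) / 2) * n)) * bs1 N p ((k : ℤ) - (N : ℤ) / 2)

/-- Υ^p[n] = (u^p[2n]² + v^p[2n]²)/4. -/
noncomputable def upsilon (N p : ℕ) (n : ℤ) : ℂ :=
  (uSeq N p (2 * n) ^ 2 + vSeq N p (2 * n) ^ 2) / 4

/-- β[n] = b̂_{[1]}^p[n] / √(Υ^p[n]). -/
noncomputable def betaS (N p : ℕ) (n : ℤ) : ℂ := bhat1 N p n / upsilon N p n ^ ((1 : ℂ) / 2)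

/-- α[n] = ω^n · β[n+N/2]. -/
noncomputable def alphaS (N p : ℕ) (n : ℤ) : ℂ := ww N ^ n * betaS N p (n + (N : ℤ) / 2)

/-- The first-level wavelet packets ψ_{[1],λ}^p, λ = 0,1, defined via their DFTs
    ψ̂_{[1],0}^p[n] = β[n] and ψ̂_{[1],1}^p[n] = α[n]. -/
noncomputable def psi1 (N p lam : ℕ) (k : ℤ) : ℂ :=
  (N : ℂ)⁻¹ * ∑ n ∈ Finset.range N,
    (if lam = 0 then betaS N p n else alphaS N p n) * ww N ^ ((k * (n : ℤ)))

open scoped ComplexOrder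

/-! ### The B-spline -/

theorem sum_neg_one_pow_choose_mul_sub_pow {p m : ℕ} (hm : m < p) (y : ℝ) :
    ∑ k ∈ Finset.range (p + 1), (-1 : ℝ) ^ k * (p.choose k : ℝ) * (y - k) ^ m = 0 := by
  have h := congrFun (fwdDiff_iter_pow_eq_zero_of_lt (R := ℝ) hm) (-y)
  rw [fwdDiff_iter_eq_sum_shift, Pi.zero_apply] at h
  rw [← mul_eq_zero_iff_left (pow_ne_zero p (neg_ne_zero.mpr one_ne_zero) : (-1 : ℝ) ^ p ≠ 0),
    ← mul_eq_zero_iff_left (pow_ne_zero m (neg_ne_zero.mpr one_ne_zero) : (-1 : ℝ) ^ m ≠ 0),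
    ← h, Finset.mul_sum, Finset.mul_sum]
  refine Finset.sum_congr rfl fun k hk ↦ ?_
  have hk' : k ≤ p := Nat.lt_succ_iff.mp (Finset.mem_range.mp hk)
  obtain ⟨j, rfl⟩ := Nat.exists_eq_add_of_le hk'
  have hy : -y + (k • (1 : ℝ)) = (-1) * (y - k) := by simp; ring
  have hs : (-1 : ℝ) ^ k * (-1) ^ k = 1 := by rw [← mul_pow]; norm_num
  rw [hy, mul_pow, Nat.add_sub_cancel_left]
  simp only [zsmul_eq_mul]
  push_cast
  rw [pow_add]
  linear_combination ((-1 : ℝ) ^ j * ((k + j).choose k : ℝ) * (y - k) ^ m * (-1) ^ m) * hs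

theorem pow_eq_max_pow_add {m : ℕ} (hm : m ≠ 0) (x : ℝ) :
    x ^ m = max x 0 ^ m + (-1) ^ m * max (-x) 0 ^ m := by
  rcases le_total 0 x with h | h
  · rw [max_eq_left h, max_eq_right (by linarith), zero_pow hm]; ring
  · rw [max_eq_right h, max_eq_left (by linarith), zero_pow hm, ← mul_pow]; ring

theorem bspline_neg {p : ℕ} (hp : 2 ≤ p) (t : ℝ) : bspline p (-t) = bspline p t := by
  have hs : ∀ k : ℕ, (-1 : ℝ) ^ k * (-1) ^ k = 1 := fun k ↦ by rw [← mul_pow]; norm_num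
  have h := sum_neg_one_pow_choose_mul_sub_pow (show p - 1 < p by omega) (t + p / 2)
  simp_rw [fun k : ℕ ↦ pow_eq_max_pow_add (show p - 1 ≠ 0 by omega) (t + p / 2 - k), mul_add,
    Finset.sum_add_distrib] at h
  unfold bspline
  congr 1
  rw [← Finset.sum_range_reflect, eq_neg_of_add_eq_zero_left h, ← Finset.sum_neg_distrib]
  refine Finset.sum_congr rfl fun k hk ↦ ?_
  have hk' : k ≤ p := Nat.lt_succ_iff.mp (Finset.mem_range.mp hk)
  have e : p + 1 - 1 - k = p - k := by omega
  rw [e, Nat.choose_symm hk', Nat.cast_sub hk']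
  have e' : -t + (p : ℝ) / 2 - (p - k) = -(t + p / 2 - k) := by ring
  rw [e']
  obtain ⟨j, rfl⟩ := Nat.exists_eq_add_of_le hk'
  obtain ⟨q, hq⟩ : ∃ q, k + j = q + 1 := ⟨k + j - 1, by omega⟩
  have hsign : (-1 : ℝ) ^ j = -((-1) ^ k * (-1) ^ (k + j - 1)) := by
    have h1 : (-1 : ℝ) ^ (k + j) = -(-1) ^ (k + j - 1) := by
      rw [hq, Nat.add_sub_cancel, pow_succ]; ring
    rw [pow_add] at h1
    linear_combination (-1 : ℝ) ^ k * h1 - (-1 : ℝ) ^ j * hs k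
  rw [Nat.add_sub_cancel_left, hsign]
  ring

theorem bspline_eq_zero {p : ℕ} (hp : 2 ≤ p) {t : ℝ} (ht : (p : ℝ) / 2 ≤ |t|) :
    bspline p t = 0 := by
  wlog h : t ≤ 0 generalizing t
  · rw [← bspline_neg hp]
    exact this (by rwa [abs_neg]) (by linarith)
  rw [abs_of_nonpos h] at ht
  unfold bspline
  rw [Finset.sum_eq_zero, mul_zero]
  intro k _
  have : (0 : ℝ) ≤ k := k.cast_nonneg
  rw [max_eq_right (by linarith), zero_pow (by omega), mul_zero]

/-! ### The root of unity -/

theorem ww_isPrimitiveRoot {N : ℕ} (hN : N ≠ 0) : IsPrimitiveRoot (ww N) N :=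
  Complex.isPrimitiveRoot_exp N hN

theorem ww_ne_zero (N : ℕ) : ww N ≠ 0 := Complex.exp_ne_zero _

theorem conj_ww_zpow (N : ℕ) (n : ℤ) : (starRingEnd ℂ) (ww N ^ n) = ww N ^ (-n) := by
  have h : (starRingEnd ℂ) (ww N) = (ww N)⁻¹ := by
    rw [ww, ← Complex.exp_conj, ← Complex.exp_neg]
    congr 1
    simp [neg_div, map_ofNat]
  rw [map_zpow₀, h, inv_zpow, zpow_neg]

theorem ww_zpow_half {M : ℕ} (hM : M ≠ 0) : ww (2 * M) ^ (M : ℤ) = -1 := by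
  have : (M : ℂ) ≠ 0 := by exact_mod_cast hM
  rw [ww, zpow_natCast, ← Complex.exp_nat_mul, ← Complex.exp_pi_mul_I]
  congr 1
  push_cast
  field_simp

theorem sum_ww_zpow_mul {N : ℕ} (hN : N ≠ 0) (a : ℤ) :
    ∑ n ∈ Finset.range N, ww N ^ (a * (n : ℤ)) = if (N : ℤ) ∣ a then (N : ℂ) else 0 := by
  have hw := ww_isPrimitiveRoot hN
  simp_rw [zpow_mul, zpow_natCast]
  split_ifs with h
  · rw [(hw.zpow_eq_one_iff_dvd a).mpr h]; simp
  · have h1 : ww N ^ a ≠ 1 := fun e ↦ h ((hw.zpow_eq_one_iff_dvd a).mp e)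
    rw [geom_sum_eq h1, ← zpow_natCast, ← zpow_mul, mul_comm, zpow_mul, hw.zpow_eq_one]
    simp

theorem sum_ww_zpow_two_mul {M : ℕ} (hM : M ≠ 0) (a : ℤ) :
    ∑ l ∈ Finset.range M, ww (2 * M) ^ (2 * a * (l : ℤ)) = if (M : ℤ) ∣ a then (M : ℂ) else 0 := by
  have h : ww (2 * M) ^ (2 : ℤ) = ww M := by
    have : (M : ℂ) ≠ 0 := by exact_mod_cast hM
    rw [ww, ww, ← Complex.exp_int_mul]
    congr 1
    push_cast
    field_simp
  rw [← sum_ww_zpow_mul hM]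
  refine Finset.sum_congr rfl fun l _ ↦ ?_
  rw [← h, ← zpow_mul, mul_assoc]

/-! ### The spectrum of the span-two B-spline -/

/-- The summand `ω^{-kn} b^p(k/2)` of the spectrum of the span-two B-spline. -/
noncomputable def splineTerm (N p : ℕ) (n k : ℤ) : ℂ :=
  ww N ^ (-(k * n)) * (bspline p ((k : ℝ) / 2) : ℂ)

theorem splineTerm_eq_zero {N p : ℕ} (hp : 2 ≤ p) (n : ℤ) {k : ℤ} (hk : (p : ℤ) ≤ |k|) :
    splineTerm N p n k = 0 := by
  have h : (p : ℝ) ≤ |(k : ℝ)| := by exact_mod_cast hk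
  rw [splineTerm, bspline_eq_zero hp (by rw [abs_div, abs_two]; linarith), Complex.ofReal_zero,
    mul_zero]

theorem splineTerm_add_half {M : ℕ} (hM : M ≠ 0) (p : ℕ) (n k : ℤ) :
    splineTerm (2 * M) p (n + M) k = (-1) ^ k * splineTerm (2 * M) p n k := by
  have e : -(k * (n + M)) = M * (-k) + -(k * n) := by ring
  have h1 : ((-1 : ℂ) ^ k)⁻¹ = (-1) ^ k := by rw [← inv_zpow, inv_neg_one]
  rw [splineTerm, splineTerm, e, zpow_add₀ (ww_ne_zero _), zpow_mul, ww_zpow_half hM, zpow_neg, h1,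
    mul_assoc]

theorem sum_range_sub_eq_tsum {M : ℕ} (f : ℤ → ℂ) (hf : ∀ k : ℤ, (M : ℤ) ≤ |k| → f k = 0) :
    ∑ k ∈ Finset.range (2 * M), f ((k : ℤ) - M) = ∑' k : ℤ, f k := by
  rw [tsum_eq_sum (s := (Finset.range (2 * M)).image fun k : ℕ ↦ (k : ℤ) - M),
    Finset.sum_image fun a _ b _ h ↦ by simpa using h]
  intro k hk
  refine hf k (le_of_not_gt fun h ↦ hk ?_)
  rw [abs_lt] at h
  exact Finset.mem_image.mpr ⟨(k + M).toNat, by simp; omega, by omega⟩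

theorem summable_splineTerm (N : ℕ) {p : ℕ} (hp : 2 ≤ p) (n : ℤ) :
    Summable (splineTerm N p n) := by
  refine summable_of_ne_finset_zero (s := Finset.Ioo (-(p : ℤ)) p) fun k hk ↦
    splineTerm_eq_zero hp n (le_of_not_gt fun h ↦ hk ?_)
  rwa [Finset.mem_Ioo, ← abs_lt]

theorem bhat1_eq_tsum {M p : ℕ} (hp : 2 ≤ p) (hpM : p ≤ M) (n : ℤ) :
    bhat1 (2 * M) p n = (∑' k, splineTerm (2 * M) p n k) / 2 := by
  rw [← sum_range_sub_eq_tsum (M := M) _ fun k hk ↦ splineTerm_eq_zero hp n (by omega),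
    Finset.sum_div]
  refine Finset.sum_congr rfl fun k hk ↦ ?_
  have hk' := Finset.mem_range.mp hk
  have e : ((2 * M : ℕ) : ℤ) / 2 = M := by omega
  have e' : (k : ℤ) % ((2 * M : ℕ) : ℤ) = k := Int.emod_eq_of_lt (by omega) (by omega)
  rw [bs1, splineTerm, e, sub_add_cancel, e', mul_div_assoc]

theorem conj_bhat1 {M p : ℕ} (hp : 2 ≤ p) (hpM : p ≤ M) (n : ℤ) :
    (starRingEnd ℂ) (bhat1 (2 * M) p n) = bhat1 (2 * M) p n := by
  rw [bhat1_eq_tsum hp hpM, map_div₀, Complex.conj_tsum, ← (Equiv.neg ℤ).tsum_eq, map_ofNat]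
  congr 1
  refine tsum_congr fun k ↦ ?_
  simp only [splineTerm, Equiv.neg_apply, map_mul, conj_ww_zpow, Complex.conj_ofReal, Int.cast_neg,
    neg_div, bspline_neg hp]
  congr 2
  ring

theorem bhat1_add_period {N : ℕ} (hN : N ≠ 0) (p : ℕ) (n : ℤ) :
    bhat1 N p (n + N) = bhat1 N p n := by
  refine Finset.sum_congr rfl fun k _ ↦ ?_
  have e (a : ℤ) : -(a * (n + N)) = N * (-a) + -(a * n) := by ring
  rw [e, zpow_add₀ (ww_ne_zero N), zpow_mul, (ww_isPrimitiveRoot hN).zpow_eq_one, one_zpow, one_mul]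

theorem uSeq_two_mul {M p : ℕ} (hp : 2 ≤ p) (hpM : p ≤ M) (n : ℤ) :
    uSeq (2 * M) p (2 * n) = bhat1 (2 * M) p n + bhat1 (2 * M) p (n + M) := by
  have hM : M ≠ 0 := by omega
  have hinj : Function.Injective fun k : ℤ ↦ 2 * k := fun a b h ↦ by simpa using h
  rw [bhat1_eq_tsum hp hpM, bhat1_eq_tsum hp hpM, ← add_div,
    ← (summable_splineTerm _ hp n).tsum_add (summable_splineTerm _ hp _), ← tsum_div_const,
    ← hinj.tsum_eq, ← sum_range_sub_eq_tsum]
  · refine Finset.sum_congr rfl fun k _ ↦ ?_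
    have e : ((2 * M : ℕ) : ℤ) / 2 = M := by omega
    rw [splineTerm_add_half hM, zpow_mul, e, splineTerm]
    have e1 : -(((k : ℤ) - M) * (2 * n)) = -(2 * ((k : ℤ) - M) * n) := by ring
    have e2 : ((2 * ((k : ℤ) - M) : ℤ) : ℝ) / 2 = (k : ℝ) - ((2 * M : ℕ) : ℝ) / 2 := by
      push_cast; ring
    rw [e1, e2]
    norm_num
  · intro k hk
    have : (p : ℤ) ≤ |2 * k| := by rw [abs_mul, abs_two]; omega
    rw [splineTerm_eq_zero hp _ this, splineTerm_eq_zero hp _ this]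
    simp
  · intro k hk
    by_contra h
    refine hk ?_
    have ho : Odd k := by
      rw [← Int.not_even_iff_odd]
      rintro ⟨j, rfl⟩
      exact h ⟨j, by dsimp; ring⟩
    dsimp only
    rw [splineTerm_add_half hM, ho.neg_one_zpow]
    ring

theorem vSeq_two_mul {M p : ℕ} (hp : 2 ≤ p) (hpM : p ≤ M) (n : ℤ) :
    vSeq (2 * M) p (2 * n) = bhat1 (2 * M) p n - bhat1 (2 * M) p (n + M) := by
  have hM : M ≠ 0 := by omega
  have hinj : Function.Injective fun k : ℤ ↦ 2 * k + 1 := fun a b h ↦ by simpa using h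
  have hphase : Complex.exp (-Real.pi * Complex.I * ((2 * n : ℤ) : ℂ) / ((2 * M : ℕ) : ℂ)) =
      ww (2 * M) ^ (-n) := by
    rw [ww, ← Complex.exp_int_mul]
    congr 1
    push_cast
    ring
  rw [bhat1_eq_tsum hp hpM, bhat1_eq_tsum hp hpM, ← sub_div,
    ← (summable_splineTerm _ hp n).tsum_sub (summable_splineTerm _ hp _), ← tsum_div_const,
    ← hinj.tsum_eq, ← sum_range_sub_eq_tsum, vSeq, hphase, Finset.mul_sum]
  · refine Finset.sum_congr rfl fun k _ ↦ ?_
    have e : ((2 * M : ℕ) : ℤ) / 2 = M := by omega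
    have ho : Odd (2 * ((k : ℤ) - M) + 1) := ⟨_, rfl⟩
    rw [splineTerm_add_half hM, ho.neg_one_zpow, e, splineTerm]
    have e1 : -((2 * ((k : ℤ) - M) + 1) * n) = -n + -(((k : ℤ) - M) * (2 * n)) := by ring
    have e2 : ((2 * ((k : ℤ) - M) + 1 : ℤ) : ℝ) / 2 =
        (k : ℝ) - ((2 * M : ℕ) : ℝ) / 2 + 1 / 2 := by
      push_cast; ring
    rw [e1, e2, zpow_add₀ (ww_ne_zero _)]
    ring
  · intro k hk
    have : (p : ℤ) ≤ |2 * k + 1| := by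
      rcases abs_cases k with h | h <;> rcases abs_cases (2 * k + 1) with h' | h' <;> omega
    rw [splineTerm_eq_zero hp _ this, splineTerm_eq_zero hp _ this]
    simp
  · intro k hk
    by_contra h
    refine hk ?_
    have he : Even k := by
      rw [← Int.not_odd_iff_even]
      rintro ⟨j, rfl⟩
      exact h ⟨j, rfl⟩
    dsimp only
    rw [splineTerm_add_half hM, he.neg_one_zpow]
    ring

/-! ### The symbols of the wavelet packets -/

theorem upsilon_eq {M p : ℕ} (hp : 2 ≤ p) (hpM : p ≤ M) (n : ℤ) :
    upsilon (2 * M) p n = (bhat1 (2 * M) p n ^ 2 + bhat1 (2 * M) p (n + M) ^ 2) / 2 := by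
  rw [upsilon, uSeq_two_mul hp hpM, vSeq_two_mul hp hpM]
  ring

theorem bhat1_add_half_add_half {M : ℕ} (hM : M ≠ 0) (p : ℕ) (n : ℤ) :
    bhat1 (2 * M) p (n + M + M) = bhat1 (2 * M) p n := by
  rw [← bhat1_add_period (N := 2 * M) (by omega) p n]
  congr 1
  push_cast
  ring

theorem upsilon_add_half {M p : ℕ} (hp : 2 ≤ p) (hpM : p ≤ M) (n : ℤ) :
    upsilon (2 * M) p (n + M) = upsilon (2 * M) p n := by
  rw [upsilon_eq hp hpM, upsilon_eq hp hpM, bhat1_add_half_add_half (by omega), add_comm]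

theorem exists_ofReal_cpow_half {z : ℂ} (hz : 0 < z) :
    ∃ s : ℝ, s ≠ 0 ∧ z ^ ((1 : ℂ) / 2) = s ∧ z = (s : ℂ) ^ 2 := by
  obtain ⟨r, hr, rfl⟩ : ∃ r : ℝ, 0 < r ∧ (r : ℂ) = z := by
    obtain ⟨h1, h2⟩ := Complex.pos_iff.mp hz
    exact ⟨z.re, h1, Complex.ext rfl h2⟩
  refine ⟨√r, (Real.sqrt_pos.mpr hr).ne', ?_, ?_⟩
  · rw [Real.sqrt_eq_rpow, Complex.ofReal_cpow hr.le]
    norm_num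
  · rw [← Complex.ofReal_pow, Real.sq_sqrt hr.le]

theorem upsilon_pos {N p : ℕ} {n : ℤ} (h : 0 < uSeq N p (2 * n) ^ 2 + vSeq N p (2 * n) ^ 2) :
    0 < upsilon N p n := by
  rw [upsilon, div_eq_mul_inv]
  exact mul_pos h (by rw [Complex.pos_iff]; norm_num)

theorem conj_betaS {M p : ℕ} (hp : 2 ≤ p) (hpM : p ≤ M) {n : ℤ} (h : 0 < upsilon (2 * M) p n) :
    (starRingEnd ℂ) (betaS (2 * M) p n) = betaS (2 * M) p n := by
  obtain ⟨s, -, hs, -⟩ := exists_ofReal_cpow_half h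
  rw [betaS, hs, map_div₀, conj_bhat1 hp hpM, Complex.conj_ofReal]

theorem betaS_add_half_add_half {M p : ℕ} (hp : 2 ≤ p) (hpM : p ≤ M) (n : ℤ) :
    betaS (2 * M) p (n + M + M) = betaS (2 * M) p n := by
  rw [betaS, bhat1_add_half_add_half (by omega), upsilon_add_half hp hpM, upsilon_add_half hp hpM,
    betaS]

theorem betaS_sq_add_sq {M p : ℕ} (hp : 2 ≤ p) (hpM : p ≤ M) {n : ℤ}
    (h : 0 < upsilon (2 * M) p n) :
    betaS (2 * M) p n ^ 2 + betaS (2 * M) p (n + M) ^ 2 = 2 := by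
  obtain ⟨s, hs0, hs, hsq⟩ := exists_ofReal_cpow_half h
  have hs' : (s : ℂ) ≠ 0 := by exact_mod_cast hs0
  rw [upsilon_eq hp hpM] at hsq
  rw [betaS, betaS, upsilon_add_half hp hpM, hs]
  field_simp
  linear_combination 2 * hsq

/-- The `λ`-th packet symbol: `β` for `λ = 0` and `α` otherwise. -/
noncomputable def packetSymbol (N p lam : ℕ) (n : ℤ) : ℂ :=
  if lam = 0 then betaS N p n else alphaS N p n

theorem sum_packetSymbol_mul_conj {M p : ℕ} (hp : 2 ≤ p) (hpM : p ≤ M)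
    (hpos : ∀ n, 0 < upsilon (2 * M) p n) {n m : ℕ} (hn : n < 2 * M) (hm : m < 2 * M)
    (hnm : (M : ℤ) ∣ m - n) :
    ∑ lam ∈ Finset.range 2,
      packetSymbol (2 * M) p lam n * (starRingEnd ℂ) (packetSymbol (2 * M) p lam m) =
        if n = m then 2 else 0 := by
  have hM : M ≠ 0 := by omega
  have hc (k : ℤ) := conj_betaS hp hpM (hpos k)
  have e : ((2 * M : ℕ) : ℤ) / 2 = M := by omega
  have hhalf (a : ℤ) : ww (2 * M) ^ (a + M) = -ww (2 * M) ^ a := by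
    rw [zpow_add₀ (ww_ne_zero _), ww_zpow_half hM, mul_neg_one]
  have hinv (a : ℤ) : ww (2 * M) ^ a * ww (2 * M) ^ (-a) = 1 := by
    rw [← zpow_add₀ (ww_ne_zero _), add_neg_cancel, zpow_zero]
  have hoff (a : ℤ) : betaS (2 * M) p a * (starRingEnd ℂ) (betaS (2 * M) p (a + M)) +
      alphaS (2 * M) p a * (starRingEnd ℂ) (alphaS (2 * M) p (a + M)) = 0 := by
    simp only [alphaS, e, map_mul, hc, betaS_add_half_add_half hp hpM, hhalf, map_neg,
      conj_ww_zpow]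
    linear_combination (-betaS (2 * M) p (a + M) * betaS (2 * M) p a) * hinv a
  simp only [Finset.sum_range_succ, Finset.sum_range_zero, zero_add, packetSymbol, if_true,
    one_ne_zero, if_false]
  obtain ⟨q, hq⟩ := hnm
  have hM' : (0 : ℤ) < M := by omega
  have hq1 : -2 < q := by nlinarith
  have hq2 : q < 2 := by nlinarith
  obtain rfl | rfl | rfl : q = -1 ∨ q = 0 ∨ q = 1 := by omega
  · have h1 : (n : ℤ) = m + M := by omega
    rw [if_neg (by omega), h1]
    have h := congrArg (starRingEnd ℂ) (hoff m)
    simp only [map_add, map_mul, Complex.conj_conj, map_zero] at h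
    rw [← h]
    ring
  · have h1 : n = m := by omega
    subst h1
    rw [if_pos rfl]
    simp only [alphaS, e, map_mul, hc, conj_ww_zpow]
    linear_combination betaS_sq_add_sq hp hpM (hpos n) + betaS (2 * M) p (n + M) ^ 2 * hinv n
  · have h1 : (m : ℤ) = n + M := by omega
    rw [if_neg (by omega), h1]
    exact hoff n

/-! ### Tight frames of shifts -/

/-- The signal with spectrum `g` on `0, …, N - 1`. -/
noncomputable def synth (N : ℕ) (g : ℕ → ℂ) (k : ℤ) : ℂ :=
  (N : ℂ)⁻¹ * ∑ n ∈ Finset.range N, g n * ww N ^ (k * (n : ℤ))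

theorem dft_synth {N : ℕ} (g : ℕ → ℂ) {n : ℕ} (hn : n < N) : dft N (synth N g) n = g n := by
  have hN : N ≠ 0 := by omega
  have hN' : (N : ℂ) ≠ 0 := by exact_mod_cast hN
  have key : ∀ m ∈ Finset.range N,
      ∑ k ∈ Finset.range N, ww N ^ (-((k : ℤ) * n)) * (g m * ww N ^ ((k : ℤ) * m)) =
        if m = n then g m * N else 0 := by
    intro m hm
    have hm' := Finset.mem_range.mp hm
    have e (k : ℤ) : (m - n : ℤ) * k = -(k * n) + k * m := by ring
    have h := sum_ww_zpow_mul hN (m - n)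
    simp_rw [e, zpow_add₀ (ww_ne_zero N)] at h
    simp_rw [mul_left_comm _ (g m), ← Finset.mul_sum, h]
    have hiff : (N : ℤ) ∣ (m : ℤ) - n ↔ m = n := by
      refine ⟨fun hd ↦ ?_, fun h ↦ by simp [h]⟩
      have := Int.eq_zero_of_abs_lt_dvd hd (by rw [abs_lt]; omega)
      omega
    simp only [hiff, mul_ite, mul_zero]
  simp_rw [dft, synth, mul_left_comm _ (N : ℂ)⁻¹, ← Finset.mul_sum, Finset.mul_sum (Finset.range N)]
  rw [Finset.sum_comm]
  simp_rw [← Finset.mul_sum]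
  rw [Finset.sum_congr rfl key, Finset.sum_ite_eq', if_pos (Finset.mem_range.mpr hn)]
  field_simp

theorem sum_mul_dvd_ite {N : ℕ} (hN : 0 < N) {x : ℤ → ℂ} (hper : ∀ k : ℤ, x (k + N) = x k)
    (k : ℤ) :
    ∑ j ∈ Finset.range N, x j * (if (N : ℤ) ∣ k - j then 1 else 0) = x k := by
  have hN' : (N : ℤ) ≠ 0 := by omega
  have h0 := Int.emod_nonneg k hN'
  have h1 := Int.emod_lt_of_pos k (show (0 : ℤ) < N by omega)
  have hx : x (k % N) = x k := by
    rw [Int.emod_def, mul_comm]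
    exact (show Function.Periodic x N from hper).sub_int_mul_eq (k / N)
  rw [Finset.sum_eq_single (k % N).toNat]
  · rw [Int.toNat_of_nonneg h0, if_pos (Int.dvd_self_sub_emod), mul_one, hx]
  · intro j hj hne
    have hj' := Finset.mem_range.mp hj
    rw [if_neg, mul_zero]
    intro hd
    have h3 := (Int.emod_eq_emod_iff_emod_sub_eq_zero).mpr (Int.emod_eq_zero_of_dvd hd)
    rw [Int.emod_eq_of_lt (show (0 : ℤ) ≤ j by omega) (by omega)] at h3
    omega
  · intro h
    exact absurd (Finset.mem_range.mpr (by omega)) h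

theorem sum_conj_synth_mul_synth {M : ℕ} (hM : M ≠ 0) (g : ℕ → ℕ → ℂ)
    (hg : ∀ n < 2 * M, ∀ m < 2 * M, (M : ℤ) ∣ m - n →
      ∑ lam ∈ Finset.range 2, g lam n * (starRingEnd ℂ) (g lam m) = if n = m then 2 else 0)
    (j k : ℤ) :
    ∑ lam ∈ Finset.range 2, ∑ l ∈ Finset.range M,
      (starRingEnd ℂ) (synth (2 * M) (g lam) (j - 2 * l)) * synth (2 * M) (g lam) (k - 2 * l) =
        if ((2 * M : ℕ) : ℤ) ∣ k - j then 1 else 0 := by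
  set N := 2 * M with hN
  have hterm (lam l : ℕ) : (starRingEnd ℂ) (synth N (g lam) (j - 2 * l)) *
      synth N (g lam) (k - 2 * l) = ((N : ℂ)⁻¹) ^ 2 * ∑ m ∈ Finset.range N, ∑ n ∈ Finset.range N,
        (g lam n * (starRingEnd ℂ) (g lam m)) *
          (ww N ^ (k * n - j * m) * ww N ^ (2 * (m - n : ℤ) * l)) := by
    simp only [synth, map_mul, map_sum, map_inv₀, Complex.conj_natCast, conj_ww_zpow]
    rw [mul_mul_mul_comm, Finset.sum_mul_sum, ← sq]
    congr 1
    refine Finset.sum_congr rfl fun m _ ↦ Finset.sum_congr rfl fun n _ ↦ ?_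
    have e : (k * n - j * m) + 2 * (m - n : ℤ) * l =
        -((j - 2 * l) * m) + (k - 2 * l) * n := by ring
    rw [← zpow_add₀ (ww_ne_zero N), e, zpow_add₀ (ww_ne_zero N)]
    ring
  have hshift (a : ℤ) := hN ▸ sum_ww_zpow_two_mul hM a
  have hinner (m n : ℕ) (hm : m ∈ Finset.range N) (hn : n ∈ Finset.range N) :
      ∑ l ∈ Finset.range M, ∑ lam ∈ Finset.range 2, (g lam n * (starRingEnd ℂ) (g lam m)) *
        (ww N ^ (k * n - j * m) * ww N ^ (2 * (m - n : ℤ) * l)) =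
      if n = m then (N : ℂ) * ww N ^ ((k - j) * n) else 0 := by
    rw [Finset.sum_comm]
    simp_rw [← Finset.mul_sum, hshift]
    rw [← Finset.sum_mul]
    by_cases hd : (M : ℤ) ∣ m - n
    · rw [hg n (Finset.mem_range.mp hn) m (Finset.mem_range.mp hm) hd, if_pos hd]
      split_ifs with h
      · subst h
        rw [sub_mul, hN]
        push_cast
        ring
      · simp
    · rw [if_neg hd, if_neg]
      · simp
      · rintro rfl
        simp at hd
  have hNc : (N : ℂ) ≠ 0 := by rw [hN]; push_cast; simpa using hM
  simp_rw [hterm, ← Finset.mul_sum]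
  simp_rw [Finset.sum_comm (s := Finset.range M)]
  simp_rw [Finset.sum_comm (s := Finset.range 2)]
  rw [Finset.sum_congr rfl fun m hm ↦ Finset.sum_congr rfl fun n hn ↦ hinner m n hm hn,
    Finset.sum_comm]
  simp_rw [Finset.sum_ite_eq]
  rw [Finset.sum_congr rfl fun n hn ↦ if_pos hn, ← Finset.mul_sum, sum_ww_zpow_mul (by omega)]
  split_ifs
  · field_simp
  · simp

theorem sum_inner1_synth_mul_synth {M : ℕ} (hM : M ≠ 0) (g : ℕ → ℕ → ℂ)
    (hg : ∀ n < 2 * M, ∀ m < 2 * M, (M : ℤ) ∣ m - n →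
      ∑ lam ∈ Finset.range 2, g lam n * (starRingEnd ℂ) (g lam m) = if n = m then 2 else 0)
    {x : ℤ → ℂ} (hper : ∀ k : ℤ, x (k + (2 * M : ℕ)) = x k) (k : ℤ) :
    ∑ lam ∈ Finset.range 2, ∑ l ∈ Finset.range M,
      inner1 (2 * M) x (fun j ↦ synth (2 * M) (g lam) (j - 2 * l)) *
        synth (2 * M) (g lam) (k - 2 * l) = x k := by
  simp_rw [inner1, Finset.sum_mul]
  simp_rw [Finset.sum_comm (s := Finset.range M)]
  rw [Finset.sum_comm, ← sum_mul_dvd_ite (by omega) hper k]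
  refine Finset.sum_congr rfl fun j _ ↦ ?_
  rw [← sum_conj_synth_mul_synth hM g hg]
  simp_rw [Finset.mul_sum, mul_assoc]

/-- The multiplier of the complementary-WP operator. -/
noncomputable def cwpMultiplier (N n : ℕ) : ℂ :=
  if n = 0 ∨ n = N / 2 then 1 else if n < N / 2 then -Complex.I else Complex.I

theorem cwpMultiplier_mul_conj (N n : ℕ) :
    cwpMultiplier N n * (starRingEnd ℂ) (cwpMultiplier N n) = 1 := by
  unfold cwpMultiplier
  split_ifs <;> simp

theorem cwpT_synth (N : ℕ) (g : ℕ → ℂ) :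
    cwpT N (synth N g) = synth N fun n ↦ cwpMultiplier N n * g n := by
  funext k
  rw [cwpT, synth]
  congr 1
  refine Finset.sum_congr rfl fun n hn ↦ ?_
  rw [dft_synth g (Finset.mem_range.mp hn), cwpMultiplier]

theorem sum_multiplier_mul_conj {g : ℕ → ℕ → ℂ} {c : ℕ → ℂ}
    (hc : ∀ n, c n * (starRingEnd ℂ) (c n) = 1) {n m : ℕ}
    (h : ∑ lam ∈ Finset.range 2, g lam n * (starRingEnd ℂ) (g lam m) = if n = m then 2 else 0) :
    ∑ lam ∈ Finset.range 2, c n * g lam n * (starRingEnd ℂ) (c m * g lam m) =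
      if n = m then 2 else 0 := by
  simp_rw [map_mul, fun lam ↦ mul_mul_mul_comm (c n) (g lam n), ← Finset.mul_sum]
  rw [h]
  split_ifs with hnm
  · rw [hnm, hc, one_mul]
  · exact mul_zero _

theorem psi1_eq_synth (N p lam : ℕ) :
    psi1 N p lam = synth N fun n ↦ packetSymbol N p lam n := rfl

/-- The union of the shifted wavelet packets and the shifted complementary
    wavelet packets forms a tight frame of Π[N] with frame bound 2:
    x = (1/2) Σ_{λ,l} ( ⟨x,ψ_{[1],λ}^p[·−2l]⟩ ψ_{[1],λ}^p[·−2l]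
                      + ⟨x,φ_{[1],λ}^p[·−2l]⟩ φ_{[1],λ}^p[·−2l] ). -/
theorem psi_cwp_tight_frame (N p : ℕ) (hN : 0 < N) (hNe : Even N)
    (hp : 2 ≤ p) (hpN : p ≤ N / 2)
    (hpos : ∀ n : ℤ, 0 < uSeq N p (2 * n) ^ 2 + vSeq N p (2 * n) ^ 2)
    (x : ℤ → ℂ) (hper : ∀ k : ℤ, x (k + N) = x k) :
    ∀ k : ℤ,
      x k = (1 / 2 : ℂ) * ∑ lam ∈ Finset.range 2, ∑ l ∈ Finset.range (N / 2),
        (inner1 N x (fun j => psi1 N p lam (j - 2 * (l : ℤ))) * psi1 N p lam (k - 2 * (l : ℤ))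
          + inner1 N x (fun j => cwpT N (psi1 N p lam) (j - 2 * (l : ℤ))) *
              cwpT N (psi1 N p lam) (k - 2 * (l : ℤ))) := by
  obtain ⟨M, rfl⟩ := hNe.two_dvd
  have hM : M ≠ 0 := by omega
  have hhalf : 2 * M / 2 = M := by omega
  rw [hhalf] at hpN
  have hpos' (n : ℤ) : 0 < upsilon (2 * M) p n := upsilon_pos (hpos n)
  have hg (n : ℕ) (hn : n < 2 * M) (m : ℕ) (hm : m < 2 * M) (hnm : (M : ℤ) ∣ m - n) :=
    sum_packetSymbol_mul_conj hp hpN hpos' hn hm hnm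
  intro k
  have h1 := sum_inner1_synth_mul_synth hM (fun lam n ↦ packetSymbol (2 * M) p lam n) hg hper k
  have h2 := sum_inner1_synth_mul_synth hM
    (fun lam n ↦ cwpMultiplier (2 * M) n * packetSymbol (2 * M) p lam n)
    (fun n hn m hm hnm ↦ sum_multiplier_mul_conj
      (g := fun lam n ↦ packetSymbol (2 * M) p lam n) (cwpMultiplier_mul_conj (2 * M))
      (hg n hn m hm hnm)) hper k
  beta_reduce at h1 h2
  simp only [psi1_eq_synth, cwpT_synth, hhalf, Finset.sum_add_distrib]
  rw [h1, h2]
  ring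

end WP
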